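/- For every integer ℓ ≥ 1 and every real ρ with 0 < ρ < 1 there exists a real α with 0 ≤ α < 1, depending only on ℓ and ρ, with the following property: for every Lebesgue-measurable set T ⊆ ℝ³ with B(0,ρ) ⊆ T ⊆ B(0,1), every polynomial vector field w : ℝ³ → ℝ³ whose components have total degree at most ℓ+1, and every real polynomial r in three variables of total degree at most ℓ−1, one has |∫_T ⟨curl w(x), r(x) x⟩ dx| ≤ α (∫_T ‖curl w(x)‖² dx)^{1/2} (∫_T ‖r(x) x‖² dx)^{1/2}. (This is the normalized, bilinear form of the uniform bound ‖π_{R}π_{Rᶜ}‖ ≤ α < 1 for the L²(T)-orthogonal projections onto the curl space R^ℓ(T) = curl (P^{ℓ+1})³ and its Koszul complement Rᶜ,ℓ(T) = x P^{ℓ−1}.) -/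

import Mathlib

open MvPolynomial MeasureTheory
open scoped InnerProductSpace

/-- The curl of a polynomial vector field on `ℝ³`, as a polynomial vector field. -/
noncomputable def polyCurl (w : Fin 3 → MvPolynomial (Fin 3) ℝ) :
    Fin 3 → MvPolynomial (Fin 3) ℝ :=
  ![pderiv 1 (w 2) - pderiv 2 (w 1),
    pderiv 2 (w 0) - pderiv 0 (w 2),
    pderiv 0 (w 1) - pderiv 1 (w 0)]

/-- Evaluation of a polynomial vector field at a point of `ℝ³`. -/
noncomputable def polyVecEval (p : Fin 3 → MvPolynomial (Fin 3) ℝ)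
    (x : EuclideanSpace ℝ (Fin 3)) : EuclideanSpace ℝ (Fin 3) :=
  (WithLp.equiv 2 (Fin 3 → ℝ)).symm fun i => eval (fun j => x j) (p i)

theorem polyCurl_add (v w : Fin 3 → MvPolynomial (Fin 3) ℝ) :
    polyCurl (v + w) = polyCurl v + polyCurl w := by
  ext1 i
  fin_cases i <;> simp [polyCurl] <;> ring

theorem polyCurl_smul (c : ℝ) (w : Fin 3 → MvPolynomial (Fin 3) ℝ) :
    polyCurl (c • w) = c • polyCurl w := by
  ext1 i
  fin_cases i <;> simp [polyCurl, smul_sub]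

/-- The curl as a linear map on polynomial vector fields. -/
noncomputable def polyCurlₗ :
    (Fin 3 → MvPolynomial (Fin 3) ℝ) →ₗ[ℝ] (Fin 3 → MvPolynomial (Fin 3) ℝ) where
  toFun := polyCurl
  map_add' := polyCurl_add
  map_smul' := polyCurl_smul

/-- The Koszul operator `r ↦ r x` as a linear map into polynomial vector fields. -/
noncomputable def polyKoszulₗ :
    MvPolynomial (Fin 3) ℝ →ₗ[ℝ] (Fin 3 → MvPolynomial (Fin 3) ℝ) where
  toFun r i := r * X i
  map_add' r s := by ext1 i; simp [add_mul]
  map_smul' c r := by ext1 i; simp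

theorem pderiv_pderiv_comm (i j : Fin 3) (p : MvPolynomial (Fin 3) ℝ) :
    pderiv i (pderiv j p) = pderiv j (pderiv i p) := by
  rcases eq_or_ne i j with rfl | hij
  · rfl
  · ext m
    simp only [coeff_pderiv, Finsupp.add_apply, Finsupp.single_apply, hij, hij.symm, if_false]
    rw [add_right_comm]
    push_cast
    ring

theorem sum_pderiv_polyCurl (w : Fin 3 → MvPolynomial (Fin 3) ℝ) :
    ∑ i, pderiv i (polyCurl w i) = 0 := by
  simp only [Fin.sum_univ_three, polyCurl, Matrix.cons_val, map_sub]
  rw [pderiv_pderiv_comm 0 1, pderiv_pderiv_comm 0 2, pderiv_pderiv_comm 1 2]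
  ring

theorem coeff_sum_pderiv_polyKoszul (r : MvPolynomial (Fin 3) ℝ) (m : Fin 3 →₀ ℕ) :
    coeff m (∑ i, pderiv i (polyKoszulₗ r i)) = (∑ i, ((m i : ℝ) + 1)) * coeff m r := by
  simp only [polyKoszulₗ, LinearMap.coe_mk, AddHom.coe_mk, coeff_sum, coeff_pderiv, coeff_mul_X,
    Finset.mul_sum, mul_comm]

theorem eq_zero_of_polyCurl_eq_polyKoszul {w : Fin 3 → MvPolynomial (Fin 3) ℝ}
    {r : MvPolynomial (Fin 3) ℝ} (h : polyCurl w = polyKoszulₗ r) : r = 0 := by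
  ext m
  have hm := coeff_sum_pderiv_polyKoszul r m
  rw [← h, sum_pderiv_polyCurl, coeff_zero] at hm
  have : (0 : ℝ) < ∑ i, ((m i : ℝ) + 1) := Finset.sum_pos (fun i _ => by positivity) ⟨0, by simp⟩
  simpa using (mul_eq_zero.mp hm.symm).resolve_left this.ne'

theorem continuous_polyVecEval (p : Fin 3 → MvPolynomial (Fin 3) ℝ) :
    Continuous (polyVecEval p) := by
  refine (PiLp.continuous_toLp 2 _).comp (continuous_pi fun i => ?_)
  exact (MvPolynomial.continuous_eval (p i)).comp (by fun_prop)

theorem polyVecEval_polyKoszul (r : MvPolynomial (Fin 3) ℝ) (x : EuclideanSpace ℝ (Fin 3)) :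
    polyVecEval (polyKoszulₗ r) x = (eval (fun j => x j) r) • x := by
  ext i
  simp [polyVecEval, polyKoszulₗ]

theorem polyVecEval_add (p q : Fin 3 → MvPolynomial (Fin 3) ℝ) :
    polyVecEval (p + q) = polyVecEval p + polyVecEval q := by
  ext x i
  simp [polyVecEval]

theorem polyVecEval_smul (c : ℝ) (p : Fin 3 → MvPolynomial (Fin 3) ℝ) :
    polyVecEval (c • p) = c • polyVecEval p := by
  ext x i
  simp [polyVecEval, smul_eval]

/-- A polynomial vector field vanishing on a ball around the origin is zero. -/
theorem eq_zero_of_polyVecEval_eqOn_ball {ρ : ℝ} (hρ : 0 < ρ)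
    {p : Fin 3 → MvPolynomial (Fin 3) ℝ}
    (h : Set.EqOn (polyVecEval p) 0 (Metric.ball 0 ρ)) : p = 0 := by
  have hU : (WithLp.toLp 2 : (Fin 3 → ℝ) → EuclideanSpace ℝ (Fin 3)) ⁻¹' Metric.ball 0 ρ ∈
      nhds 0 := (PiLp.continuous_toLp 2 _).continuousAt.preimage_mem_nhds
    (by simpa using Metric.ball_mem_nhds _ hρ)
  obtain ⟨ε, hε, hball⟩ := Metric.mem_nhds_iff.mp hU
  ext1 i
  refine funext_set (fun _ => Metric.ball 0 ε)
    (fun _ => infinite_of_mem_nhds 0 (Metric.ball_mem_nhds _ hε)) fun x hx => ?_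
  have hx' : x ∈ Metric.ball 0 ε := by rwa [ball_pi _ hε]
  simpa [polyVecEval] using congrArg (fun v => v i) (h (hball hx'))

theorem memLp_polyVecEval {T : Set (EuclideanSpace ℝ (Fin 3))} (hT : T ⊆ Metric.ball 0 1)
    (p : Fin 3 → MvPolynomial (Fin 3) ℝ) :
    MemLp (polyVecEval p) 2 (volume.restrict T) := by
  have hK := isCompact_closedBall (0 : EuclideanSpace ℝ (Fin 3)) 1
  have := Fact.mk (hK.measure_lt_top (μ := volume))
  obtain ⟨C, hC⟩ := hK.exists_bound_of_continuousOn (continuous_polyVecEval p).continuousOn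
  have h : MemLp (polyVecEval p) 2 (volume.restrict (Metric.closedBall 0 1)) :=
    MemLp.of_bound (continuous_polyVecEval p).aestronglyMeasurable C
      ((ae_restrict_iff' Metric.isClosed_closedBall.measurableSet).mpr (.of_forall hC))
  exact h.mono_measure (Measure.restrict_mono (hT.trans Metric.ball_subset_closedBall) le_rfl)

/-- Polynomial vector fields as elements of `L²(T)`, for `T` contained in the unit ball. -/
noncomputable def polyVecToL2 {T : Set (EuclideanSpace ℝ (Fin 3))} (hT : T ⊆ Metric.ball 0 1) :
    (Fin 3 → MvPolynomial (Fin 3) ℝ) →ₗ[ℝ]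
      Lp (EuclideanSpace ℝ (Fin 3)) 2 (volume.restrict T) where
  toFun p := (memLp_polyVecEval hT p).toLp
  map_add' p q := by
    rw [← MemLp.toLp_add]
    exact MemLp.toLp_congr _ _ (by rw [polyVecEval_add])
  map_smul' c p := by
    rw [RingHom.id_apply, ← MemLp.toLp_const_smul]
    exact MemLp.toLp_congr _ _ (by rw [polyVecEval_smul])

theorem inner_polyVecToL2 {T : Set (EuclideanSpace ℝ (Fin 3))} (hT : T ⊆ Metric.ball 0 1)
    (p q : Fin 3 → MvPolynomial (Fin 3) ℝ) :
    ⟪polyVecToL2 hT p, polyVecToL2 hT q⟫_ℝ =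
      ∫ x in T, ⟪polyVecEval p x, polyVecEval q x⟫_ℝ := by
  rw [L2.inner_def]
  refine integral_congr_ae ?_
  filter_upwards [(memLp_polyVecEval hT p).coeFn_toLp, (memLp_polyVecEval hT q).coeFn_toLp]
    with x hp hq
  simp only [polyVecToL2, LinearMap.coe_mk, AddHom.coe_mk, hp, hq]

theorem norm_polyVecToL2 {T : Set (EuclideanSpace ℝ (Fin 3))} (hT : T ⊆ Metric.ball 0 1)
    (p : Fin 3 → MvPolynomial (Fin 3) ℝ) :
    ‖polyVecToL2 hT p‖ = Real.sqrt (∫ x in T, ‖polyVecEval p x‖ ^ 2) := by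
  rw [norm_eq_sqrt_real_inner, inner_polyVecToL2]
  simp_rw [real_inner_self_eq_norm_sq]

theorem norm_polyVecToL2_mono {S T : Set (EuclideanSpace ℝ (Fin 3))} (hST : S ⊆ T)
    (hT : T ⊆ Metric.ball 0 1) (p : Fin 3 → MvPolynomial (Fin 3) ℝ) :
    ‖polyVecToL2 (hST.trans hT) p‖ ≤ ‖polyVecToL2 hT p‖ := by
  simp only [polyVecToL2, LinearMap.coe_mk, AddHom.coe_mk, Lp.norm_toLp]
  exact ENNReal.toReal_mono (memLp_polyVecEval hT p).eLpNorm_ne_top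
    (eLpNorm_mono_measure _ (Measure.restrict_mono hST le_rfl))

theorem eq_zero_of_polyVecToL2_ball_eq_zero {ρ : ℝ} (hρ : 0 < ρ)
    (hT : Metric.ball (0 : EuclideanSpace ℝ (Fin 3)) ρ ⊆ Metric.ball 0 1)
    {p : Fin 3 → MvPolynomial (Fin 3) ℝ} (h : polyVecToL2 hT p = 0) : p = 0 := by
  refine eq_zero_of_polyVecEval_eqOn_ball hρ (Measure.eqOn_open_of_ae_eq (μ := volume) ?_
    Metric.isOpen_ball (continuous_polyVecEval p).continuousOn continuousOn_const)
  have hp := (memLp_polyVecEval hT p).coeFn_toLp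
  have h' : (memLp_polyVecEval hT p).toLp = 0 := h
  rw [h'] at hp
  exact hp.symm.trans (Lp.coeFn_zero _ _ _)

/-- On a finite-dimensional space, a linear map is bounded by any linear map with smaller
kernel. -/
theorem LinearMap.exists_norm_le_mul_norm_of_ker_le {E F G : Type*} [AddCommGroup E] [Module ℝ E]
    [Module.Finite ℝ E] [NormedAddCommGroup F] [NormedSpace ℝ F] [NormedAddCommGroup G]
    [NormedSpace ℝ G] (A : E →ₗ[ℝ] F) (B : E →ₗ[ℝ] G) (h : A.ker ≤ B.ker) :
    ∃ C : ℝ, 0 ≤ C ∧ ∀ e, ‖B e‖ ≤ C * ‖A e‖ := by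
  let g := LinearMap.toContinuousLinearMap
    ((A.ker.liftQ B h).comp (A.quotKerEquivRange.symm : A.range →ₗ[ℝ] E ⧸ A.ker))
  refine ⟨‖g‖, g.opNorm_nonneg, fun e => ?_⟩
  have hg : g ⟨A e, LinearMap.mem_range_self A e⟩ = B e := by
    simp [g, LinearMap.quotKerEquivRange_symm_apply_image]
  simpa [hg] using g.le_opNorm ⟨A e, LinearMap.mem_range_self A e⟩

/-- If the norm of `v` is controlled by its distance to the line spanned by `u`, then `u` and `v`
satisfy a strengthened Cauchy–Schwarz inequality. -/
theorem abs_real_inner_le_of_norm_le_mul_norm_sub {H : Type*} [NormedAddCommGroup H]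
    [InnerProductSpace ℝ H] {u v : H} {C : ℝ}
    (h : ∀ t : ℝ, ‖v‖ ≤ C * ‖t • u - v‖) :
    |⟪u, v⟫_ℝ| ≤ Real.sqrt (1 - 1 / (1 + C ^ 2)) * ‖u‖ * ‖v‖ := by
  have hC1 : 0 < 1 + C ^ 2 := by positivity
  have hα : 1 - 1 / (1 + C ^ 2) = C ^ 2 / (1 + C ^ 2) := by field_simp; ring
  have hquad : ∀ t : ℝ, 0 ≤ ‖u‖ ^ 2 * (t * t) + (-2 * ⟪u, v⟫_ℝ) * t +
      C ^ 2 / (1 + C ^ 2) * ‖v‖ ^ 2 := by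
    intro t
    have h1 : ‖v‖ ^ 2 ≤ C ^ 2 * ‖t • u - v‖ ^ 2 := by
      rw [← mul_pow]
      exact pow_le_pow_left₀ (norm_nonneg _) (h t) 2
    have h2 : ‖v‖ ^ 2 ≤ (1 + C ^ 2) * ‖t • u - v‖ ^ 2 := by
      linarith [sq_nonneg ‖t • u - v‖]
    have h3 : 1 / (1 + C ^ 2) * ‖v‖ ^ 2 ≤ ‖t • u - v‖ ^ 2 := by
      rwa [one_div, inv_mul_le_iff₀ hC1]
    rw [norm_sub_sq_real, norm_smul, mul_pow, Real.norm_eq_abs, sq_abs, inner_smul_left] at h3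
    rw [← hα]
    simp only [conj_trivial] at h3
    linarith
  have hdisc := discrim_le_zero hquad
  rw [discrim] at hdisc
  rw [hα]
  refine abs_le_of_sq_le_sq ?_ (by positivity)
  rw [mul_pow, mul_pow, Real.sq_sqrt (by positivity)]
  linarith

/-- Uniform bound `‖π_R π_{Rᶜ}‖ ≤ α < 1` for the `L²(T)`-orthogonal
projections onto the curl space `R^ℓ(T) = curl (P^{ℓ+1})³` and its Koszul complement
`Rᶜ,ℓ(T) = x P^{ℓ−1}`, in normalized bilinear form: for every measurable `T` with
`B(0,ρ) ⊆ T ⊆ B(0,1)`, every polynomial vector field `w` of component degree `≤ ℓ+1` and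
every polynomial `r` of total degree `≤ ℓ−1`,
`|∫_T ⟨curl w, r x⟩| ≤ α (∫_T ‖curl w‖²)^{1/2} (∫_T ‖r x‖²)^{1/2}`. -/
theorem curl_koszul_projection_bound (ℓ : ℕ) (hℓ : 1 ≤ ℓ) (ρ : ℝ) (hρ0 : 0 < ρ) (hρ1 : ρ < 1) :
    ∃ α : ℝ, 0 ≤ α ∧ α < 1 ∧
      ∀ T : Set (EuclideanSpace ℝ (Fin 3)), MeasurableSet T →
        Metric.ball 0 ρ ⊆ T → T ⊆ Metric.ball 0 1 →
        ∀ w : Fin 3 → MvPolynomial (Fin 3) ℝ, (∀ i, (w i).totalDegree ≤ ℓ + 1) →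
        ∀ r : MvPolynomial (Fin 3) ℝ, r.totalDegree ≤ ℓ - 1 →
          abs (∫ x in T, ⟪polyVecEval (polyCurl w) x, (eval (fun j => x j) r) • x⟫_ℝ) ≤
            α * Real.sqrt (∫ x in T, ‖polyVecEval (polyCurl w) x‖ ^ 2) *
              Real.sqrt (∫ x in T, ‖(eval (fun j => x j) r) • x‖ ^ 2) := by
  have hball : Metric.ball (0 : EuclideanSpace ℝ (Fin 3)) ρ ⊆ Metric.ball 0 1 :=
    Metric.ball_subset_ball hρ1.le
  let ι := (restrictTotalDegree (Fin 3) ℝ (ℓ + 1)).subtype.compLeft (Fin 3)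
  let κ := (restrictTotalDegree (Fin 3) ℝ (ℓ - 1)).subtype
  let A := (polyVecToL2 hball).comp ((polyCurlₗ.comp ι).coprod (-(polyKoszulₗ.comp κ)))
  let B := (polyVecToL2 (subset_refl (Metric.ball 0 1))).comp
    ((polyKoszulₗ.comp κ).comp (LinearMap.snd ℝ (Fin 3 → restrictTotalDegree (Fin 3) ℝ (ℓ + 1)) _))
  have hker : A.ker ≤ B.ker := by
    rintro ⟨w, r⟩ hA
    have h0 : polyCurlₗ (ι w) + -polyKoszulₗ (κ r) = 0 :=
      eq_zero_of_polyVecToL2_ball_eq_zero hρ0 hball hA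
    have hr : κ r = 0 := eq_zero_of_polyCurl_eq_polyKoszul (add_neg_eq_zero.mp h0)
    simp [B, hr]
  obtain ⟨C, hC, hAB⟩ := A.exists_norm_le_mul_norm_of_ker_le B hker
  refine ⟨Real.sqrt (1 - 1 / (1 + C ^ 2)), Real.sqrt_nonneg _, ?_, ?_⟩
  · rw [Real.sqrt_lt' one_pos, one_pow, sub_lt_self_iff]
    positivity
  intro T _ hρT hT w hw r hr
  simp_rw [← polyVecEval_polyKoszul]
  rw [← inner_polyVecToL2 hT, ← norm_polyVecToL2 hT, ← norm_polyVecToL2 hT]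
  refine abs_real_inner_le_of_norm_le_mul_norm_sub fun t => ?_
  let e : (Fin 3 → restrictTotalDegree (Fin 3) ℝ (ℓ + 1)) × restrictTotalDegree (Fin 3) ℝ (ℓ - 1) :=
    (t • fun i => ⟨w i, (mem_restrictTotalDegree _ _ _).mpr (hw i)⟩,
      ⟨r, (mem_restrictTotalDegree _ _ _).mpr hr⟩)
  have hι : ι e.1 = t • w := rfl
  have hA : A e = polyVecToL2 hball (t • polyCurl w - polyKoszulₗ r) := by
    change polyVecToL2 hball (polyCurl (ι e.1) + -polyKoszulₗ r) = _
    rw [hι, polyCurl_smul, sub_eq_add_neg]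
  rw [← map_smul, ← map_sub]
  calc ‖polyVecToL2 hT (polyKoszulₗ r)‖
      ≤ ‖B e‖ := norm_polyVecToL2_mono hT (subset_refl _) _
    _ ≤ C * ‖A e‖ := hAB e
    _ ≤ C * ‖polyVecToL2 hT (t • polyCurl w - polyKoszulₗ r)‖ := by
      rw [hA]
      exact mul_le_mul_of_nonneg_left (norm_polyVecToL2_mono hρT hT _) hC
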